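/- Let Φ = (1+√5)/2 and define u_n = −2⌊nΦ⌋ + 5n − 2 for n ≥ 1. Then for every n ≥ 1 the difference u_{n+1} − u_n belongs to {1, 3}, and whenever u_{n+1} − u_n = 3 for some n ≥ 2, one has u_n − u_{n−1} = 1 (i.e., the difference sequence contains no two consecutive 3's). -/

import Mathlib

/-- The golden mean `Φ = (1+√5)/2`. -/
noncomputable def Phi : ℝ := (1 + Real.sqrt 5) / 2

/-!
Writing `d n = ⌊(n + 1) α⌋ - ⌊n α⌋`, one has `u (n + 1) - u n = 5 - 2 * d n`. A slope `1 ≤ α ≤ 2`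
forces `d n ∈ {1, 2}`, and a difference `3` of `u` corresponds to `d n = 1`. Two consecutive such
steps would make the floor grow by only `2` over a distance `2 * α`, which is impossible as soon as
`3 ≤ 2 * α`.
-/

section Floor

variable {R : Type*} [Ring R] [LinearOrder R] [IsStrictOrderedRing R] [FloorRing R]
  {a : R} {m : ℤ}

theorem floor_add_int_le_floor_add (x : R) (h : (m : R) ≤ a) : ⌊x⌋ + m ≤ ⌊x + a⌋ := by
  rw [← Int.floor_add_intCast]
  gcongr

theorem floor_add_le_floor_add_int (x : R) (h : a ≤ (m : R)) : ⌊x + a⌋ ≤ ⌊x⌋ + m := by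
  rw [← Int.floor_add_intCast]
  gcongr

theorem floor_add_sub_floor_eq_or_eq_add_one (x : R) (hma : (m : R) ≤ a) (ham : a ≤ m + 1) :
    ⌊x + a⌋ - ⌊x⌋ = m ∨ ⌊x + a⌋ - ⌊x⌋ = m + 1 := by
  have lower : ⌊x⌋ + m ≤ ⌊x + a⌋ := floor_add_int_le_floor_add x hma
  have upper : ⌊x + a⌋ ≤ ⌊x⌋ + (m + 1) := floor_add_le_floor_add_int x (mod_cast ham)
  omega

theorem add_one_le_floor_add_sub_floor_of_eq {x : R} (ha : 2 * (m : R) + 1 ≤ 2 * a)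
    (h : ⌊x + a + a⌋ - ⌊x + a⌋ = m) : m + 1 ≤ ⌊x + a⌋ - ⌊x⌋ := by
  have two_steps : ⌊x⌋ + (2 * m + 1) ≤ ⌊x + 2 * a⌋ :=
    floor_add_int_le_floor_add x (mod_cast ha)
  rw [two_mul a, ← add_assoc x] at two_steps
  omega

end Floor

theorem fib_difference_sequence_general {R : Type*} [CommRing R] [LinearOrder R]
    [IsStrictOrderedRing R] [FloorRing R] {α : R} (hα : 3 ≤ 2 * α) (hα' : α ≤ 2) (u : ℕ → ℤ)
    (hu : ∀ n : ℕ, u n = -2 * ⌊(n : R) * α⌋ + 5 * n - 2) :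
    (∀ n, u (n + 1) - u n = 1 ∨ u (n + 1) - u n = 3) ∧
    (∀ n, u (n + 2) - u (n + 1) = 3 → u (n + 1) - u n = 1) := by
  have diff_eq (n : ℕ) : u (n + 1) - u n = 5 - 2 * (⌊n * α + α⌋ - ⌊n * α⌋) := by
    rw [hu, hu, Nat.cast_succ, Nat.cast_succ, add_one_mul]
    ring
  have floor_step (n : ℕ) : ⌊n * α + α⌋ - ⌊n * α⌋ = 1 ∨ ⌊n * α + α⌋ - ⌊n * α⌋ = 1 + 1 :=
    floor_add_sub_floor_eq_or_eq_add_one _ (by push_cast; linarith) (by push_cast; linarith)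
  have diff_mem (n : ℕ) : u (n + 1) - u n = 1 ∨ u (n + 1) - u n = 3 := by
    have := diff_eq n
    have := floor_step n
    omega
  refine ⟨diff_mem, fun n h ↦ ?_⟩
  have second_step : ⌊n * α + α + α⌋ - ⌊n * α + α⌋ = 1 := by
    have := diff_eq (n + 1)
    rw [h, Nat.cast_succ, add_one_mul] at this
    omega
  have first_step : 1 + 1 ≤ ⌊n * α + α⌋ - ⌊n * α⌋ :=
    add_one_le_floor_add_sub_floor_of_eq (by push_cast; linarith) second_step
  have := diff_eq n
  have := diff_mem n
  omega

theorem three_le_two_mul_phi : 3 ≤ 2 * Phi := by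
  have : 2 ≤ √5 := Real.le_sqrt_of_sq_le (by norm_num)
  unfold Phi
  linarith

theorem phi_lt_two : Phi < 2 :=
  Real.goldenRatio_lt_two

theorem fib_difference_sequence (u : ℕ → ℤ)
    (hu : ∀ n : ℕ, u n = -2 * ⌊(n : ℝ) * Phi⌋ + 5 * n - 2) :
    (∀ n : ℕ, 1 ≤ n → u (n + 1) - u n = 1 ∨ u (n + 1) - u n = 3) ∧
    (∀ n : ℕ, 2 ≤ n → u (n + 1) - u n = 3 → u n - u (n - 1) = 1) := by
  have ⟨diff_mem, diff_pred⟩ :=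
    fib_difference_sequence_general three_le_two_mul_phi phi_lt_two.le u hu
  exact ⟨fun n _ => diff_mem n, fun | n + 1, _ => diff_pred n⟩
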